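/- For the lexicographically ordered square 𝕆: (i) for the full homeomorphism group 𝒢_𝕆, the family {cl(𝒢_𝕆·x) : x ∈ 𝕆} of closures of orbits has exactly 5 elements (i.e. h(𝒢_𝕆, 𝕆) = 4); (ii) for every subgroup G of the homeomorphism group of 𝕆, the family {cl(G·x) : x ∈ 𝕆} is either infinite or has at least 5 elements; (iii) for every natural number n ≥ 4 there exists a subgroup G of the homeomorphism group of 𝕆 whose family {cl(G·x) : x ∈ 𝕆} has exactly n + 1 elements; and (iv) there exists a subgroup G for which this family is infinite. Equivalently, P_h(𝕆) = {n : n ≥ 4} ∪ {+∞}. -/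

import Mathlib

open Set

/-- The unit interval `[0,1]`. -/
local notation "𝕀" => unitInterval

/-- The strict lexicographic order on `[0,1] × [0,1]`:
`(x,y) < (s,t)` iff `x < s`, or `x = s` and `y < t`. -/
def lexLT (p q : 𝕀 × 𝕀) : Prop := p.1 < q.1 ∨ (p.1 = q.1 ∧ p.2 < q.2)

/-- The order topology of the lexicographic order on `[0,1] × [0,1]`, generated by the
open rays. -/
def lexTop : TopologicalSpace (𝕀 × 𝕀) :=
  TopologicalSpace.generateFrom
    ({S | ∃ a, S = {x | lexLT a x}} ∪ {S | ∃ a, S = {x | lexLT x a}})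

/-- The group of self-homeomorphisms of a topological space, under composition. -/
instance homeoGroup {X : Type*} [TopologicalSpace X] : Group (X ≃ₜ X) where
  mul f g := g.trans f
  one := Homeomorph.refl X
  inv := Homeomorph.symm
  mul_assoc _ _ _ := rfl
  one_mul _ := Homeomorph.ext fun _ => rfl
  mul_one _ := Homeomorph.ext fun _ => rfl
  inv_mul_cancel := Homeomorph.self_trans_symm

/-- The family of closures of orbits of a subgroup `G` of the homeomorphism group of
the lexicographically ordered square. -/
def orbitClosures (G : Subgroup (@Homeomorph (𝕀 × 𝕀) (𝕀 × 𝕀) lexTop lexTop)) :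
    Set (Set (𝕀 × 𝕀)) :=
  {S | ∃ x : 𝕀 × 𝕀, S = @closure _ lexTop {y | ∃ g ∈ G, g x = y}}

/-!
The path components of the lexicographic square are its vertical fibres, since a path that met two
fibres would cross uncountably many disjoint open strips. Hence a homeomorphism preserves the set
of end points of fibres (the points whose removal leaves their path component connected), the two
extreme points (the end points whose path component is a neighbourhood), and the two fibres through
them. These sets cut the square into five pieces, and lexicographic products of increasing
homeomorphisms of the interval, together with the half-turn, act transitively on each piece.

The closure of an orbit of a larger group is determined by the closure of an orbit of a smaller
one, so that the full group has the fewest orbit closures. To get more of them, cut the inner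
fibres into finitely many bands symmetric about the half-turn and consider the homeomorphisms that
preserve them; the bands are alternately relatively open and relatively closed, which keeps the
closures apart.
-/

section OrbitClosures

open MulAction

variable {X Γ ι : Type*} [Group Γ] [MulAction Γ X]

/-- The subgroup of the elements of `Γ` that preserve a colouring of `X`. -/
def colorStabilizer (Γ : Type*) [Group Γ] [MulAction Γ X] (c : X → ι) : Subgroup Γ where
  carrier := {g | ∀ x, c (g • x) = c x}
  one_mem' x := by rw [one_smul]
  mul_mem' hf hg x := by rw [mul_smul, hf, hg]
  inv_mem' {g} hg x := by rw [← hg, smul_inv_smul]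

theorem mem_colorStabilizer {c : X → ι} {g : Γ} :
    g ∈ colorStabilizer Γ c ↔ ∀ x, c (g • x) = c x :=
  Iff.rfl

theorem orbit_colorStabilizer {c : X → ι}
    (hc : ∀ x y, c x = c y → y ∈ orbit (colorStabilizer Γ c) x) (x : X) :
    orbit (colorStabilizer Γ c) x = c ⁻¹' {c x} := by
  refine Subset.antisymm ?_ fun y hy => hc x y (Eq.symm hy)
  rintro _ ⟨g, rfl⟩
  exact g.2 x

variable [TopologicalSpace X]

/-- The family of closures of orbits of an action of `G` on `X`. -/
def orbitClosureFamily (G X : Type*) [TopologicalSpace X] [Group G] [MulAction G X] :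
    Set (Set X) :=
  range fun x : X => closure (orbit G x)

theorem closure_biUnion_orbit_closure_orbit [ContinuousConstSMul Γ X] {G H : Subgroup Γ}
    (hGH : G ≤ H) (x : X) :
    closure (⋃ s ∈ closure (orbit G x), orbit H s) = closure (orbit H x) := by
  have orbit_subset : orbit G x ⊆ orbit H x := by
    rintro _ ⟨g, rfl⟩
    exact ⟨⟨g, hGH g.2⟩, rfl⟩
  refine (closure_minimal (iUnion₂_subset ?_) isClosed_closure).antisymm
    (closure_mono (subset_biUnion_of_mem (subset_closure (mem_orbit_self x))))
  rintro s hs _ ⟨h, rfl⟩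
  exact map_mem_closure (continuous_const_smul (h : Γ)) (closure_mono orbit_subset hs)
    (mapsTo_smul_orbit h x)

theorem encard_orbitClosureFamily_anti [ContinuousConstSMul Γ X] {G H : Subgroup Γ}
    (hGH : G ≤ H) : (orbitClosureFamily H X).encard ≤ (orbitClosureFamily G X).encard := by
  have eq_image : orbitClosureFamily H X =
      (fun S => closure (⋃ s ∈ S, orbit H s)) '' orbitClosureFamily G X := by
    simp only [orbitClosureFamily, ← range_comp, Function.comp_def,
      closure_biUnion_orbit_closure_orbit hGH]
  exact eq_image ▸ encard_image_le _ _

theorem infinite_orbitClosureFamily_bot [T1Space X] [Infinite X] :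
    (orbitClosureFamily (⊥ : Subgroup Γ) X).Infinite := by
  have orbit_eq (x : X) : orbit (⊥ : Subgroup Γ) x = {x} := by
    ext y
    simp [mem_orbit_iff, eq_comm]
  simpa only [orbitClosureFamily, orbit_eq, closure_singleton] using
    infinite_range_of_injective singleton_injective

theorem injOn_closure_fiber [LinearOrder ι] {c : X → ι}
    (hc : ∀ i, IsOpen {x | i < c x} ∨ ∃ U, IsOpen U ∧ c ⁻¹' {i} ⊆ U ∧ ∀ x ∈ U, c x ≤ i) :
    InjOn (fun i => closure (c ⁻¹' {i})) (range c) := by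
  rintro _ ⟨x, rfl⟩ _ ⟨y, rfl⟩ h
  change closure (c ⁻¹' {c x}) = closure (c ⁻¹' {c y}) at h
  by_contra hne
  wlog hlt : c x < c y generalizing x y
  · exact this y x h.symm (Ne.symm hne) (lt_of_le_of_ne (not_lt.1 hlt) (Ne.symm hne))
  have hx : x ∈ closure (c ⁻¹' {c y}) := h ▸ subset_closure rfl
  have hy : y ∈ closure (c ⁻¹' {c x}) := h ▸ subset_closure rfl
  rcases hc (c x) with hopen | ⟨U, hU, hxU, hUle⟩
  · obtain ⟨z, hlt, heq⟩ := mem_closure_iff.1 hy _ hopen hlt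
    exact hlt.ne' heq
  · obtain ⟨z, hzU, heq⟩ := mem_closure_iff.1 hx U hU (hxU rfl)
    exact (hUle z hzU).not_gt (heq ▸ hlt)

theorem encard_orbitClosureFamily_colorStabilizer [LinearOrder ι] {c : X → ι}
    (htrans : ∀ x y, c x = c y → y ∈ orbit (colorStabilizer Γ c) x)
    (hsep : ∀ i, IsOpen {x | i < c x} ∨ ∃ U, IsOpen U ∧ c ⁻¹' {i} ⊆ U ∧ ∀ x ∈ U, c x ≤ i) :
    (orbitClosureFamily (colorStabilizer Γ c) X).encard = (range c).encard := by
  have eq_image : orbitClosureFamily (colorStabilizer Γ c) X =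
      (fun i => closure (c ⁻¹' {i})) '' range c := by
    simp only [orbitClosureFamily, orbit_colorStabilizer htrans, ← range_comp, Function.comp_def]
  rw [eq_image, (injOn_closure_fiber hsep).encard_image]

end OrbitClosures

section LexProducts

variable {α α' β γ : Type*} [LinearOrder α] [LinearOrder α'] [LinearOrder β] [LinearOrder γ]

/-- The isomorphism of lexicographic products that covers an isomorphism of the bases and acts
on the fibre above `a` by `k a`. -/
def lexFiberwiseIso (e : α ≃o α') (k : α → β ≃o γ) : α ×ₗ β ≃o α' ×ₗ γ where
  toFun p := toLex (e (ofLex p).1, k (ofLex p).1 (ofLex p).2)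
  invFun q := toLex (e.symm (ofLex q).1, (k (e.symm (ofLex q).1)).symm (ofLex q).2)
  left_inv p := by simp
  right_inv q := by simp
  map_rel_iff' {p q} := by
    simp only [Equiv.coe_fn_mk, Prod.Lex.le_iff, ofLex_toLex, e.lt_iff_lt, e.injective.eq_iff]
    refine or_congr_right (and_congr_right fun h => ?_)
    rw [h, (k _).le_iff_le]

theorem Ioo_toLex_of_fst_eq (a : α) (b c : β) :
    Ioo (toLex (a, b)) (toLex (a, c)) = (fun y => toLex (a, y)) '' Ioo b c := by
  ext p
  induction p with | _ p
  simp only [mem_Ioo, Prod.Lex.toLex_lt_toLex, mem_image, toLex_inj]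
  constructor
  · rintro ⟨h | ⟨rfl, hb⟩, h' | ⟨heq, hc⟩⟩
    exacts [(h.trans h').false.elim, (h.ne' heq).elim, h'.false.elim, ⟨p.2, ⟨hb, hc⟩, rfl⟩]
  · rintro ⟨y, hy, rfl⟩
    exact ⟨Or.inr ⟨rfl, hy.1⟩, Or.inr ⟨rfl, hy.2⟩⟩

theorem strictMono_toLex_mk (a : α) : StrictMono fun b : β => toLex (a, b) := fun _ _ h =>
  Prod.Lex.toLex_lt_toLex.2 (Or.inr ⟨rfl, h⟩)

variable [TopologicalSpace (α ×ₗ β)] [OrderTopology (α ×ₗ β)]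
  [TopologicalSpace β] [OrderTopology β]

theorem isEmbedding_toLex_mk (a : α) : Topology.IsEmbedding fun b : β => toLex (a, b) := by
  refine (strictMono_toLex_mk a).isEmbedding_of_ordConnected ⟨?_⟩
  rintro _ ⟨b, rfl⟩ _ ⟨c, rfl⟩ p hp
  have fst_eq : a = (ofLex p).1 :=
    (Prod.Lex.monotone_fst (toLex (a, b)) p hp.1).antisymm
      (Prod.Lex.monotone_fst p (toLex (a, c)) hp.2)
  exact ⟨(ofLex p).2, by simp [fst_eq]⟩

theorem isOpen_strip (A : Set α) {U : Set β} (hU : IsOpen U) (hmin : ∀ b ∈ U, ¬IsMin b)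
    (hmax : ∀ b ∈ U, ¬IsMax b) :
    IsOpen {p : α ×ₗ β | (ofLex p).1 ∈ A ∧ (ofLex p).2 ∈ U} := by
  refine isOpen_iff_mem_nhds.2 fun p ⟨hA, hpU⟩ => ?_
  induction p with | _ p
  obtain ⟨b, c, hbc, hsub⟩ := (mem_nhds_iff_exists_Ioo_subset'
    (not_isMin_iff.1 (hmin _ hpU)) (not_isMax_iff.1 (hmax _ hpU))).1 (hU.mem_nhds hpU)
  have hp : toLex p ∈ Ioo (toLex (p.1, b)) (toLex (p.1, c)) := by
    rw [Ioo_toLex_of_fst_eq]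
    exact ⟨p.2, hbc, rfl⟩
  refine Filter.mem_of_superset (Ioo_mem_nhds hp.1 hp.2) ?_
  rw [Ioo_toLex_of_fst_eq]
  rintro _ ⟨y, hy, rfl⟩
  exact ⟨hA, hsub hy⟩

/-- A path joining two fibres would cover all the fibres in between, whose interiors are pairwise
disjoint open sets; by separability of the unit interval there would be only countably many. -/
theorem fst_eq_of_joined [BoundedOrder β] [DenselyOrdered β] [Nontrivial β]
    (hα : ∀ a b : α, a < b → ¬(Ioo a b).Countable) {p q : α ×ₗ β} (h : Joined p q) :
    (ofLex p).1 = (ofLex q).1 := by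
  by_contra hne
  wlog hlt : (ofLex p).1 < (ofLex q).1 generalizing p q
  · exact this h.symm (Ne.symm hne) (lt_of_le_of_ne (not_lt.1 hlt) (Ne.symm hne))
  obtain ⟨f⟩ := h
  obtain ⟨b, hb⟩ := exists_between (bot_lt_top (α := β))
  have Icc_subset : Icc p q ⊆ range f :=
    (isPreconnected_range f.continuous).Icc_subset f.source_mem_range f.target_mem_range
  let strip (a : α) : Set (α ×ₗ β) := {p | (ofLex p).1 ∈ ({a} : Set α) ∧ (ofLex p).2 ∈ Ioo ⊥ ⊤}
  have isOpen_preimage (a : α) : IsOpen (f ⁻¹' strip a) :=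
    (isOpen_strip {a} isOpen_Ioo (fun _ h => not_isMin_of_lt h.1)
      fun _ h => not_isMax_of_lt h.2).preimage f.continuous
  have nonempty_preimage : ∀ a ∈ Ioo (ofLex p).1 (ofLex q).1, (f ⁻¹' strip a).Nonempty := by
    rintro a ⟨hpa, haq⟩
    have hmem : toLex (a, b) ∈ Icc p q :=
      ⟨Prod.Lex.le_iff.2 (Or.inl hpa), Prod.Lex.le_iff.2 (Or.inl haq)⟩
    obtain ⟨t, ht⟩ := Icc_subset hmem
    exact ⟨t, by simp [strip, ht, hb.1, hb.2]⟩
  have disjoint_preimage :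
      (Ioo (ofLex p).1 (ofLex q).1).PairwiseDisjoint fun a => f ⁻¹' strip a := by
    refine fun a _ a' _ hne => disjoint_left.2 fun t ht ht' => hne ?_
    exact ht.1.symm.trans ht'.1
  exact hα _ _ hlt
    (disjoint_preimage.countable_of_isOpen (fun a _ => isOpen_preimage a) nonempty_preimage)

theorem joined_iff_fst_eq [BoundedOrder β] [DenselyOrdered β] [Nontrivial β] [PathConnectedSpace β]
    (hα : ∀ a b : α, a < b → ¬(Ioo a b).Countable) {p q : α ×ₗ β} :
    Joined p q ↔ (ofLex p).1 = (ofLex q).1 := by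
  refine ⟨fst_eq_of_joined hα, fun h => ?_⟩
  have := (PathConnectedSpace.joined (ofLex p).2 (ofLex q).2).map
    (isEmbedding_toLex_mk (ofLex p).1).continuous
  rwa [Prod.mk.eta, h, Prod.mk.eta] at this

end LexProducts

theorem isPreconnected_compl_singleton_iff {α : Type*} [TopologicalSpace α]
    [ConditionallyCompleteLinearOrder α] [BoundedOrder α] [OrderTopology α] [DenselyOrdered α]
    {b : α} : IsPreconnected {b}ᶜ ↔ b = ⊥ ∨ b = ⊤ := by
  rw [isPreconnected_iff_ordConnected]
  constructor
  · intro h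
    by_contra! hb
    exact h.out hb.1.symm hb.2.symm ⟨bot_le, le_top⟩ rfl
  · rintro (rfl | rfl)
    exacts [Ioi_bot (α := α) ▸ ordConnected_Ioi, Iio_top (α := α) ▸ ordConnected_Iio]

section Cells

variable {R : Type*} [Ring R] [LinearOrder R] [FloorRing R]

/-- The cell of `t` in the decomposition of a line into the integers and the open intervals
between consecutive integers: `2 n` stands for `{n}` and `2 n + 1` for `(n, n + 1)`. -/
def cell (t : R) : ℤ :=
  ⌊t⌋ + ⌈t⌉

variable [IsStrictOrderedRing R] {s t : R} {n : ℤ}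

theorem cell_lt_two_mul_iff : cell t < 2 * n ↔ t < n := by
  rw [← Int.floor_lt]
  refine ⟨fun h => ?_, fun h => ?_⟩
  · have := Int.floor_le_ceil t
    unfold cell at h
    omega
  · have := Int.ceil_le.2 (Int.floor_lt.1 h).le
    unfold cell
    omega

theorem two_mul_lt_cell_iff : 2 * n < cell t ↔ n < t := by
  rw [← Int.lt_ceil]
  refine ⟨fun h => ?_, fun h => ?_⟩
  · have := Int.floor_le_ceil t
    unfold cell at h
    omega
  · have := Int.le_floor.2 (Int.lt_ceil.1 h).le
    unfold cell
    omega

theorem cell_eq_two_mul_iff : cell t = 2 * n ↔ t = n := by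
  rw [eq_iff_le_not_lt, eq_iff_le_not_lt, ← not_lt, ← not_lt, cell_lt_two_mul_iff,
    two_mul_lt_cell_iff]

theorem cell_eq_two_mul_add_one_iff : cell t = 2 * n + 1 ↔ t ∈ Ioo (n : R) ((n + 1 : ℤ) : R) := by
  rw [mem_Ioo, ← cell_lt_two_mul_iff, ← two_mul_lt_cell_iff]
  omega

theorem cell_intCast_sub : cell (n - t) = 2 * n - cell t := by
  rw [cell, cell, sub_eq_add_neg, Int.floor_intCast_add, Int.ceil_intCast_add, Int.floor_neg,
    Int.ceil_neg]
  ring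

theorem exists_mem_Ioo_of_cell_eq (h : cell s = cell t) (hne : s ≠ t) :
    ∃ n : ℤ, s ∈ Ioo (n : R) ((n + 1 : ℤ) : R) ∧ t ∈ Ioo (n : R) ((n + 1 : ℤ) : R) := by
  rcases Int.even_or_odd' (cell t) with ⟨n, ht | ht⟩
  · exact (hne ((cell_eq_two_mul_iff.1 (h.trans ht)).trans (cell_eq_two_mul_iff.1 ht).symm)).elim
  · exact ⟨n, cell_eq_two_mul_add_one_iff.1 (h.trans ht), cell_eq_two_mul_add_one_iff.1 ht⟩

theorem cell_half {K : Type*} [Field K] [LinearOrder K] [IsStrictOrderedRing K] [FloorRing K]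
    (n : ℤ) : cell ((n : K) / 2) = n := by
  rcases Int.even_or_odd' n with ⟨k, rfl | rfl⟩
  · rw [cell_eq_two_mul_iff]
    push_cast
    ring
  · rw [cell_eq_two_mul_add_one_iff]
    push_cast
    constructor <;> linarith

variable [TopologicalSpace R] [OrderClosedTopology R]

theorem isOpen_setOf_cell_lt (hn : Even n) : IsOpen {t : R | cell t < n} := by
  obtain ⟨n, rfl⟩ := hn.two_dvd
  simp only [cell_lt_two_mul_iff]
  exact isOpen_Iio

theorem isOpen_setOf_lt_cell (hn : Even n) : IsOpen {t : R | n < cell t} := by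
  obtain ⟨n, rfl⟩ := hn.two_dvd
  simp only [two_mul_lt_cell_iff]
  exact isOpen_Ioi

end Cells

section UnitInterval

theorem unitInterval_not_countable_Ioo (a b : 𝕀) (hab : a < b) : ¬(Ioo a b).Countable := by
  intro h
  obtain ⟨c, hac, hcb⟩ := exists_between hab
  obtain ⟨d, had, hdc⟩ := exists_between hac
  exact hdc.ne (h.isTotallyDisconnected _ Subset.rfl isPreconnected_Ioo
    ⟨had, hdc.trans hcb⟩ ⟨hac, hcb⟩)

theorem unitInterval_symm_eq_of_ne {a b : 𝕀} (ha : a = 0 ∨ a = 1) (hb : b = 0 ∨ b = 1)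
    (hab : a ≠ b) : unitInterval.symm a = b := by
  obtain ⟨rfl | rfl, rfl | rfl⟩ := And.intro ha hb <;> simp_all

theorem exists_strictMono_continuous_apply_eq {u v a b : ℝ} (hua : u < a) (hab : a ≤ b)
    (hbv : b < v) :
    ∃ f : ℝ → ℝ, StrictMono f ∧ Continuous f ∧ f a = b ∧ ∀ t ∉ Ioo u v, f t = t := by
  -- `f` is the maximum of the identity and of the broken line through `(u, u)`, `(a, b)`, `(v, v)`.
  let left (t : ℝ) : ℝ := u + (b - u) / (a - u) * (t - u)
  let right (t : ℝ) : ℝ := v - (v - b) / (v - a) * (v - t)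
  have hau : 0 < a - u := sub_pos.2 hua
  have hav : 0 < v - a := sub_pos.2 (hab.trans_lt hbv)
  have slope_left : 1 ≤ (b - u) / (a - u) := (one_le_div hau).2 (by linarith)
  have slope_right_pos : 0 < (v - b) / (v - a) := div_pos (sub_pos.2 hbv) hav
  have slope_right : (v - b) / (v - a) ≤ 1 := (div_le_one hav).2 (by linarith)
  refine ⟨fun t => max t (min (left t) (right t)), fun s t hst => ?_, by fun_prop, ?_, ?_⟩
  · have hleft : left s < left t := by
      have := mul_lt_mul_of_pos_left hst (zero_lt_one.trans_le slope_left)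
      simp only [left]
      linarith
    have hright : right s < right t := by
      have := mul_lt_mul_of_pos_left hst slope_right_pos
      simp only [right]
      linarith
    exact max_lt_max hst (min_lt_min hleft hright)
  · have hleft : left a = b := by
      simp only [left]
      field_simp
      ring
    have hright : right a = b := by
      simp only [right]
      field_simp
      ring
    simp only [hleft, hright, min_self, max_eq_right hab]
  · intro t ht
    refine max_eq_left ?_
    rcases le_or_gt t u with htu | hut
    · exact min_le_of_left_le (by simp only [left]; nlinarith)
    · have hvt : v ≤ t := not_lt.1 fun h => ht ⟨hut, h⟩
      exact min_le_of_right_le (by simp only [right]; nlinarith)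

theorem exists_orderIso_apply_eq_of_mem_Ioo {u v a b : 𝕀} (ha : a ∈ Ioo u v) (hb : b ∈ Ioo u v) :
    ∃ k : 𝕀 ≃o 𝕀, k a = b ∧ ∀ t ∉ Ioo u v, k t = t := by
  wlog hab : a ≤ b generalizing a b
  · obtain ⟨k, hk, hfix⟩ := this hb ha (not_le.1 hab).le
    exact ⟨k.symm, k.symm_apply_eq.2 hk.symm, fun t ht => k.symm_apply_eq.2 (hfix t ht).symm⟩
  obtain ⟨f, hmono, hcont, hfab, hfix⟩ := exists_strictMono_continuous_apply_eq
    (Subtype.coe_lt_coe.2 ha.1) (Subtype.coe_le_coe.2 hab) (Subtype.coe_lt_coe.2 hb.2)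
  have hf0 : f 0 = 0 := hfix 0 fun h => h.1.not_ge u.2.1
  have hf1 : f 1 = 1 := hfix 1 fun h => h.2.not_ge v.2.2
  have hmaps : MapsTo f 𝕀 𝕀 := fun t ht =>
    ⟨hf0 ▸ hmono.monotone ht.1, hf1 ▸ hmono.monotone ht.2⟩
  have hsurj : Function.Surjective (hmaps.restrict f 𝕀 𝕀) := fun c =>
    mem_range_of_exists_le_of_exists_ge (hcont.restrict hmaps)
      ⟨0, hf0.trans_le c.2.1⟩ ⟨1, c.2.2.trans_eq hf1.symm⟩
  exact ⟨StrictMono.orderIsoOfSurjective _ (fun _ _ h => hmono h) hsurj, Subtype.ext hfab,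
    fun t ht => Subtype.ext (hfix t ht)⟩

theorem exists_orderIso_apply_eq_of_cell_eq {N : ℕ} (hN : 0 < N) {a b : 𝕀}
    (h : cell (N * a : ℝ) = cell (N * b : ℝ)) :
    ∃ k : 𝕀 ≃o 𝕀, k a = b ∧ ∀ t, cell (N * k t : ℝ) = cell (N * t : ℝ) := by
  rcases eq_or_ne a b with rfl | hne
  · exact ⟨OrderIso.refl _, rfl, fun _ => rfl⟩
  have hN' : (0 : ℝ) < N := Nat.cast_pos.2 hN
  obtain ⟨n, ha, hb⟩ := exists_mem_Ioo_of_cell_eq h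
    fun h => hne (Subtype.ext (mul_left_cancel₀ hN'.ne' h))
  have hn : 0 ≤ n := by
    have : (0 : ℝ) < (n + 1 : ℤ) := (mul_nonneg hN'.le a.2.1).trans_lt ha.2
    exact Int.lt_add_one_iff.1 (by exact_mod_cast this)
  have hnN : n + 1 ≤ N := by
    have : (n : ℝ) < N := ha.1.trans_le (mul_le_of_le_one_right hN'.le a.2.2)
    exact Int.add_one_le_iff.2 (by exact_mod_cast this)
  have hnN' : n ≤ N := (Int.le_add_one le_rfl).trans hnN
  let u : 𝕀 := ⟨(n : ℤ) / N, by positivity, (div_le_one hN').2 (by exact_mod_cast hnN')⟩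
  let v : 𝕀 := ⟨(n + 1 : ℤ) / N, by positivity, (div_le_one hN').2 (by exact_mod_cast hnN)⟩
  have mem_Ioo_iff (t : 𝕀) : t ∈ Ioo u v ↔ (N * t : ℝ) ∈ Ioo (n : ℝ) ((n + 1 : ℤ) : ℝ) :=
    and_congr (div_lt_iff₀' hN') (lt_div_iff₀' hN')
  obtain ⟨k, hk, hfix⟩ :=
    exists_orderIso_apply_eq_of_mem_Ioo ((mem_Ioo_iff a).2 ha) ((mem_Ioo_iff b).2 hb)
  refine ⟨k, hk, fun t => ?_⟩
  by_cases ht : t ∈ Ioo u v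
  · have hkt : k t ∈ Ioo u v :=
      ⟨(hfix u fun h => h.1.false).symm.trans_lt (k.strictMono ht.1),
        (k.strictMono ht.2).trans_eq (hfix v fun h => h.2.false)⟩
    rw [cell_eq_two_mul_add_one_iff.2 ((mem_Ioo_iff t).1 ht),
      cell_eq_two_mul_add_one_iff.2 ((mem_Ioo_iff _).1 hkt)]
  · rw [hfix t ht]

end UnitInterval

section HomeomorphAction

variable {X : Type*} [TopologicalSpace X]

/-- The action of the homeomorphisms of a space on its points, by evaluation. -/
instance homeoAction : MulAction (X ≃ₜ X) X where
  smul g x := g x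
  one_smul _ := rfl
  mul_smul _ _ _ := rfl

theorem homeo_smul_def (g : X ≃ₜ X) (x : X) : g • x = g x :=
  rfl

instance homeoAction_continuousConstSMul : ContinuousConstSMul (X ≃ₜ X) X :=
  ⟨fun g => g.continuous⟩

theorem joined_smul_iff {g : X ≃ₜ X} {x y : X} : Joined (g • x) (g • y) ↔ Joined x y := by
  refine ⟨fun h => ?_, fun h => h.map g.continuous⟩
  simpa only [homeo_smul_def, g.symm_apply_apply] using h.map g.symm.continuous

theorem pathComponent_smul (g : X ≃ₜ X) (x : X) :
    pathComponent (g • x) = g '' pathComponent x := by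
  ext y
  obtain ⟨y, rfl⟩ := g.surjective y
  rw [g.injective.mem_set_image]
  exact joined_smul_iff

end HomeomorphAction

namespace LexSquare

open scoped unitInterval

local notation "𝕆" => 𝕀 ×ₗ 𝕀

/-- The topology of the lexicographically ordered square, carried by the type synonym of
`𝕀 × 𝕀` whose order is the lexicographic one. -/
instance topologicalSpace : TopologicalSpace 𝕆 :=
  lexTop

instance orderTopology : OrderTopology 𝕆 := by
  have lexLT_iff (p q : 𝕀 × 𝕀) : lexLT p q ↔ toLex p < toLex q :=
    Prod.Lex.toLex_lt_toLex.symm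
  refine ⟨congrArg TopologicalSpace.generateFrom (ext fun S => ?_)⟩
  simp only [mem_union, mem_ofPred_eq, lexLT_iff, ← exists_or]
  rfl

theorem encard_orbitClosures (G : Subgroup (𝕆 ≃ₜ 𝕆)) :
    (orbitClosures G).encard = (orbitClosureFamily G 𝕆).encard := by
  have orbit_eq (p : 𝕆) : MulAction.orbit G p = {q | ∃ g ∈ G, g p = q} := by
    ext q
    exact ⟨fun ⟨g, h⟩ => ⟨g, g.2, h⟩, fun ⟨g, hg, h⟩ => ⟨⟨g, hg⟩, h⟩⟩
  refine congrArg encard (ext fun S => ?_)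
  simp only [orbitClosureFamily, orbit_eq]
  exact exists_congr fun _ => eq_comm

/-- The bottom and top edges of the square, that is, the end points of the vertical fibres. -/
def edges : Set 𝕆 :=
  {p | (ofLex p).2 = 0 ∨ (ofLex p).2 = 1}

/-- The left and right sides of the square, that is, its first and last vertical fibres. -/
def sides : Set 𝕆 :=
  {p | (ofLex p).1 = 0 ∨ (ofLex p).1 = 1}

theorem joined_iff {p q : 𝕆} : Joined p q ↔ (ofLex p).1 = (ofLex q).1 :=
  have : PathConnectedSpace 𝕀 :=
    isPathConnected_iff_pathConnectedSpace.1
      ((convex_Icc 0 1).isPathConnected ⟨0, unitInterval.zero_mem⟩)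
  joined_iff_fst_eq unitInterval_not_countable_Ioo

theorem mem_edges_iff {p : 𝕆} : p ∈ edges ↔ IsPreconnected (pathComponent p \ {p}) := by
  have eq_image : pathComponent p \ {p} = (fun y => toLex ((ofLex p).1, y)) '' {(ofLex p).2}ᶜ := by
    rw [image_compl_eq_range_sdiff_image (isEmbedding_toLex_mk _).injective, image_singleton]
    congr 1
    ext q
    refine joined_iff.trans ⟨fun h => ⟨(ofLex q).2, by simp [h]⟩, ?_⟩
    rintro ⟨y, rfl⟩
    rfl
  rw [eq_image, (isEmbedding_toLex_mk _).isInducing.isPreconnected_image,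
    isPreconnected_compl_singleton_iff]
  rfl

theorem smul_mem_edges_iff (g : 𝕆 ≃ₜ 𝕆) {p : 𝕆} : g • p ∈ edges ↔ p ∈ edges := by
  have image_eq : pathComponent (g • p) \ {g • p} = g '' (pathComponent p \ {p}) := by
    rw [image_sdiff g.injective, pathComponent_smul, image_singleton, homeo_smul_def]
  rw [mem_edges_iff, mem_edges_iff, image_eq, g.isInducing.isPreconnected_image]

/-- The least and the greatest point of the square. -/
def extremes : Set 𝕆 :=
  {toLex (0, 0), toLex (1, 1)}

theorem pathComponent_eq_fiber (p : 𝕆) : pathComponent p = {q | (ofLex p).1 = (ofLex q).1} :=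
  ext fun _ => joined_iff

theorem pathComponent_mem_nhds_of_mem_extremes {p : 𝕆} (hp : p ∈ extremes) :
    pathComponent p ∈ nhds p := by
  rw [pathComponent_eq_fiber]
  rcases hp with rfl | rfl
  · have hlt : (⊥ : 𝕆) < toLex (0, 1) :=
      Prod.Lex.toLex_lt_toLex.2 (Or.inr ⟨rfl, zero_lt_one⟩)
    refine Filter.mem_of_superset (Iio_mem_nhds hlt) fun q hq => ?_
    rcases Prod.Lex.lt_iff.1 hq with h | h
    exacts [(h.not_ge bot_le).elim, h.1.symm]
  · have hlt : toLex (1, 0) < (⊤ : 𝕆) :=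
      Prod.Lex.toLex_lt_toLex.2 (Or.inr ⟨rfl, zero_lt_one⟩)
    refine Filter.mem_of_superset (Ioi_mem_nhds hlt) fun q hq => ?_
    rcases Prod.Lex.lt_iff.1 hq with h | h
    exacts [(h.not_ge le_top).elim, h.1]

theorem mem_extremes_of_pathComponent_mem_nhds {p : 𝕆} (hp : p ∈ edges)
    (hnhds : pathComponent p ∈ nhds p) : p ∈ extremes := by
  rw [pathComponent_eq_fiber] at hnhds
  by_contra hne
  obtain ⟨hbot, htop⟩ := not_or.1 hne
  rcases hp with hp | hp
  · obtain ⟨l, hlp, hsub⟩ := exists_Ioc_subset_of_mem_nhds hnhds ⟨⊥, bot_lt_iff_ne_bot.2 hbot⟩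
    have hfst : (ofLex l).1 < (ofLex p).1 :=
      (Prod.Lex.lt_iff.1 hlp).resolve_right fun h => h.2.not_ge (hp.trans_le bot_le)
    obtain ⟨z, hlz, hzp⟩ := exists_between hfst
    have hz : toLex (z, 0) ∈ Ioc l p :=
      ⟨Prod.Lex.lt_iff.2 (Or.inl hlz), Prod.Lex.le_iff.2 (Or.inl hzp)⟩
    exact hzp.ne' (hsub hz)
  · obtain ⟨r, hpr, hsub⟩ := exists_Ico_subset_of_mem_nhds hnhds ⟨⊤, lt_top_iff_ne_top.2 htop⟩
    have hfst : (ofLex p).1 < (ofLex r).1 :=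
      (Prod.Lex.lt_iff.1 hpr).resolve_right fun h => h.2.not_ge (le_top.trans_eq hp.symm)
    obtain ⟨z, hpz, hzr⟩ := exists_between hfst
    have hz : toLex (z, 0) ∈ Ico p r :=
      ⟨Prod.Lex.le_iff.2 (Or.inl hpz), Prod.Lex.lt_iff.2 (Or.inl hzr)⟩
    exact hpz.ne (hsub hz)

theorem extremes_subset_edges : extremes ⊆ edges := by
  rintro _ (rfl | rfl)
  exacts [Or.inl rfl, Or.inr rfl]

theorem mem_extremes_iff {p : 𝕆} : p ∈ extremes ↔ p ∈ edges ∧ pathComponent p ∈ nhds p :=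
  ⟨fun hp => ⟨extremes_subset_edges hp, pathComponent_mem_nhds_of_mem_extremes hp⟩,
    fun hp => mem_extremes_of_pathComponent_mem_nhds hp.1 hp.2⟩

theorem smul_mem_extremes_iff (g : 𝕆 ≃ₜ 𝕆) {p : 𝕆} : g • p ∈ extremes ↔ p ∈ extremes := by
  rw [mem_extremes_iff, mem_extremes_iff, smul_mem_edges_iff, pathComponent_smul, homeo_smul_def,
    g.isOpenEmbedding.image_mem_nhds]

theorem mem_sides_iff {p : 𝕆} : p ∈ sides ↔ ∃ e ∈ extremes, Joined p e := by
  simp only [extremes, mem_insert_iff, mem_singleton_iff, exists_eq_or_imp, exists_eq_left,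
    joined_iff]
  rfl

theorem smul_mem_sides_iff (g : 𝕆 ≃ₜ 𝕆) {p : 𝕆} : g • p ∈ sides ↔ p ∈ sides := by
  rw [mem_sides_iff, mem_sides_iff, (MulAction.surjective g).exists]
  simp only [smul_mem_extremes_iff, joined_smul_iff]

theorem extremes_subset_sides : extremes ⊆ sides := fun p hp => mem_sides_iff.2 ⟨p, hp, .refl p⟩

/-- The rotation of the square by a half-turn, which reverses its order. -/
def reverse : 𝕆 ≃ 𝕆 where
  toFun p := toLex (σ (ofLex p).1, σ (ofLex p).2)
  invFun p := toLex (σ (ofLex p).1, σ (ofLex p).2)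
  left_inv p := by simp
  right_inv p := by simp

theorem antitone_reverse : Antitone reverse := fun p q hpq => by
  simp only [reverse, Equiv.coe_fn_mk, Prod.Lex.le_iff, ofLex_toLex,
    unitInterval.symm_lt_symm, unitInterval.symm_inj, unitInterval.symm_le_symm]
  rwa [eq_comm, ← Prod.Lex.le_iff]

theorem continuous_reverse : Continuous reverse :=
  Monotone.continuous_of_surjective (β := 𝕆ᵒᵈ) antitone_reverse.dual_right reverse.surjective

/-- The half-turn `reverse` as a homeomorphism. -/
def reverseHomeo : 𝕆 ≃ₜ 𝕆 where
  toEquiv := reverse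
  continuous_toFun := continuous_reverse
  continuous_invFun := continuous_reverse

/-- The index of the band that contains the height `y`. The `2 m + 1` inner cells of the division of
the unit interval into `m + 1` equal parts are grouped into pairs symmetric about `1 / 2`, and these
pairs are numbered outwards from the centre; for `0 < y < 1` the index is at most `m`. -/
noncomputable def band (m : ℕ) (y : 𝕀) : ℕ :=
  (cell (((m + 1 : ℕ) : ℝ) * y) - (m + 1)).natAbs

theorem cell_mul_symm (N : ℕ) (y : 𝕀) : cell (N * (σ y : ℝ)) = 2 * N - cell (N * (y : ℝ)) := by
  rw [← cell_intCast_sub, unitInterval.coe_symm_eq, mul_one_sub, Int.cast_natCast]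

theorem band_symm (m : ℕ) (y : 𝕀) : band m (σ y) = band m y := by
  rw [band, band, cell_mul_symm]
  omega

theorem cell_eq_or_of_band_eq {m : ℕ} {y z : 𝕀} (h : band m y = band m z) :
    cell (((m + 1 : ℕ) : ℝ) * y) = cell (((m + 1 : ℕ) : ℝ) * z) ∨
      cell (((m + 1 : ℕ) : ℝ) * (σ y : 𝕀)) = cell (((m + 1 : ℕ) : ℝ) * z) := by
  rw [cell_mul_symm]
  unfold band at h
  omega

theorem band_le {m : ℕ} {y : 𝕀} (hy : y ∈ Ioo 0 1) : band m y ≤ m := by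
  have hpos : (0 : ℝ) < (m + 1 : ℕ) := by positivity
  have hlt := two_mul_lt_cell_iff.2 (by simpa using mul_pos hpos hy.1 :
    ((0 : ℤ) : ℝ) < (m + 1 : ℕ) * y)
  have hgt := cell_lt_two_mul_iff.2 (by simpa using mul_lt_of_lt_one_right hpos hy.2 :
    ((m + 1 : ℕ) * y : ℝ) < ((m + 1 : ℕ) : ℤ))
  unfold band
  omega

theorem exists_band_eq {m j : ℕ} (hj : j ≤ m) : ∃ y ∈ Ioo (0 : 𝕀) 1, band m y = j := by
  have hjm : (j : ℝ) ≤ m := Nat.cast_le.2 hj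
  let y : ℝ := (m + 1 - j) / (2 * (m + 1))
  have hy : y ∈ Ioo 0 1 := by
    refine ⟨div_pos (by linarith) (by positivity), (div_lt_one (by positivity)).2 ?_⟩
    have : (0 : ℝ) ≤ j := j.cast_nonneg
    linarith
  refine ⟨⟨y, Ioo_subset_Icc_self hy⟩, hy, ?_⟩
  have cell_eq : cell (((m + 1 : ℕ) : ℝ) * y) = m + 1 - j := by
    rw [← cell_half (K := ℝ) (m + 1 - j)]
    congr 1
    simp only [y]
    push_cast
    field_simp
  rw [band, cell_eq]
  omega

/-- The bands are alternately pairs of points and pairs of open intervals. -/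
theorem isOpen_setOf_lt_band_or_band_le (m j : ℕ) :
    IsOpen {y | j < band m y} ∨ IsOpen {y | band m y ≤ j} := by
  have hcont : Continuous fun y : 𝕀 => ((m + 1 : ℕ) : ℝ) * y := by fun_prop
  rcases Int.even_or_odd ((m + 1 : ℤ) - j) with heven | hodd
  · left
    have heven' : Even ((m + 1 : ℤ) + j) := by grind
    convert ((isOpen_setOf_cell_lt heven).preimage hcont).union
      ((isOpen_setOf_lt_cell heven').preimage hcont) using 1
    ext y
    simp only [band, mem_ofPred_eq, mem_union, mem_preimage]
    omega
  · right
    have heven : Even ((m + 1 : ℤ) - (j + 1)) := by grind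
    have heven' : Even ((m + 1 : ℤ) + (j + 1)) := by grind
    convert ((isOpen_setOf_lt_cell heven).preimage hcont).inter
      ((isOpen_setOf_cell_lt heven').preimage hcont) using 1
    ext y
    simp only [band, mem_ofPred_eq, mem_inter_iff, mem_preimage]
    omega

open Classical in
/-- The index of a point in a partition of the square, invariant under `reverse`, into `m + 5`
pieces. For `m = 0` the pieces are the orbits of the full homeomorphism group, and larger `m`
subdivide the interiors of the inner fibres into bands. -/
noncomputable def stratum (m : ℕ) (p : 𝕆) : ℕ :=
  if p ∈ extremes then 0
  else if p ∈ edges ∩ sides then 1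
  else if p ∈ edges then 2
  else if p ∈ sides then 3
  else 4 + band m (ofLex p).2

theorem stratum_pos_iff {m : ℕ} {p : 𝕆} : 0 < stratum m p ↔ p ∉ extremes := by
  unfold stratum
  split_ifs <;> simp_all

theorem one_lt_stratum_iff {m : ℕ} {p : 𝕆} : 1 < stratum m p ↔ p ∉ edges ∩ sides := by
  have := @extremes_subset_edges p
  have := @extremes_subset_sides p
  unfold stratum
  split_ifs <;> grind

theorem two_lt_stratum_iff {m : ℕ} {p : 𝕆} : 2 < stratum m p ↔ p ∉ edges := by
  have := @extremes_subset_edges p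
  unfold stratum
  split_ifs <;> grind

theorem three_lt_stratum_iff {m : ℕ} {p : 𝕆} : 3 < stratum m p ↔ p ∉ edges ∪ sides := by
  have := @extremes_subset_edges p
  unfold stratum
  split_ifs <;> grind

theorem stratum_of_notMem {m : ℕ} {p : 𝕆} (hp : p ∉ edges ∪ sides) :
    stratum m p = 4 + band m (ofLex p).2 := by
  have := @extremes_subset_edges p
  simp_all [stratum]

theorem notMem_edges_iff {p : 𝕆} : p ∉ edges ↔ (ofLex p).2 ∈ Ioo 0 1 := by
  simp [edges, unitInterval.pos_iff_ne_zero, unitInterval.lt_one_iff_ne_one]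

theorem notMem_sides_iff {p : 𝕆} : p ∉ sides ↔ (ofLex p).1 ∈ Ioo 0 1 := by
  simp [sides, unitInterval.pos_iff_ne_zero, unitInterval.lt_one_iff_ne_one]

theorem four_add_lt_stratum_iff {m j : ℕ} {p : 𝕆} :
    4 + j < stratum m p ↔ p ∉ edges ∪ sides ∧ j < band m (ofLex p).2 := by
  by_cases hp : p ∈ edges ∪ sides
  · have hle : stratum m p ≤ 3 := not_lt.1 (three_lt_stratum_iff.not.2 (not_not.2 hp))
    exact iff_of_false (by omega) fun h => h.1 hp
  · simp only [stratum_of_notMem hp, hp, not_false_eq_true, true_and, Nat.add_lt_add_iff_left]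

theorem stratum_eq_four_add_iff {m j : ℕ} {p : 𝕆} :
    stratum m p = 4 + j ↔ p ∉ edges ∪ sides ∧ band m (ofLex p).2 = j := by
  by_cases hp : p ∈ edges ∪ sides
  · have hle : stratum m p ≤ 3 := not_lt.1 (three_lt_stratum_iff.not.2 (not_not.2 hp))
    exact iff_of_false (by omega) fun h => h.1 hp
  · simp only [stratum_of_notMem hp, hp, not_false_eq_true, true_and, Nat.add_left_cancel_iff]

theorem stratum_lt (m : ℕ) (p : 𝕆) : stratum m p < m + 5 := by
  by_contra! h
  have hlt : 4 + m < stratum m p := by omega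
  obtain ⟨hp, hband⟩ := four_add_lt_stratum_iff.1 hlt
  exact hband.not_ge (band_le (notMem_edges_iff.1 (not_or.1 hp).1))

theorem exists_stratum_eq {m i : ℕ} (hi : i < m + 5) : ∃ p, stratum m p = i := by
  obtain ⟨c, hc⟩ := exists_between (zero_lt_one (α := 𝕀))
  obtain hlt | ⟨j, rfl⟩ := i.lt_or_ge 4 |>.imp_right Nat.exists_eq_add_of_le
  · have h0 : stratum m (toLex (0, 0)) = 0 := if_pos (Or.inl rfl)
    have h1 : stratum m (toLex (0, 1)) = 1 := by
      simp [stratum, extremes, edges, sides]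
    have h2 : stratum m (toLex (c, 0)) = 2 := by
      simp [stratum, extremes, edges, sides, hc.1.ne', hc.2.ne]
    have h3 : stratum m (toLex (0, c)) = 3 := by
      simp [stratum, extremes, edges, sides, hc.1.ne', hc.2.ne]
    interval_cases i
    exacts [⟨_, h0⟩, ⟨_, h1⟩, ⟨_, h2⟩, ⟨_, h3⟩]
  · have hj : j ≤ m := by omega
    obtain ⟨y, hy, hband⟩ := exists_band_eq hj
    have hp : toLex (c, y) ∉ edges ∪ sides :=
      not_or.2 ⟨notMem_edges_iff.2 hy, notMem_sides_iff.2 hc⟩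
    exact ⟨_, stratum_eq_four_add_iff.2 ⟨hp, hband⟩⟩

theorem range_stratum (m : ℕ) : range (stratum m) = Iio (m + 5) :=
  Subset.antisymm (range_subset_iff.2 (stratum_lt m)) fun _ => exists_stratum_eq

/-- The group of the homeomorphisms of the square that preserve each stratum. -/
noncomputable abbrev stratumStabilizer (m : ℕ) : Subgroup (𝕆 ≃ₜ 𝕆) :=
  colorStabilizer (𝕆 ≃ₜ 𝕆) (stratum m)

theorem mem_stratumStabilizer_iff {m : ℕ} {g : 𝕆 ≃ₜ 𝕆} :
    g ∈ stratumStabilizer m ↔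
      ∀ p ∉ edges ∪ sides, band m (ofLex (g • p)).2 = band m (ofLex p).2 := by
  have smul_mem_union_iff (p : 𝕆) : g • p ∈ edges ∪ sides ↔ p ∈ edges ∪ sides :=
    or_congr (smul_mem_edges_iff g) (smul_mem_sides_iff g)
  rw [mem_colorStabilizer]
  refine forall_congr' fun p => ?_
  by_cases hp : p ∈ edges ∪ sides
  · have stratum_smul : stratum m (g • p) = stratum m p := by
      classical
      rcases hp with hp | hp <;>
        simp [stratum, smul_mem_extremes_iff, smul_mem_edges_iff, smul_mem_sides_iff, hp]
    simp [hp, stratum_smul]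
  · rw [stratum_of_notMem hp, stratum_of_notMem ((smul_mem_union_iff p).not.2 hp)]
    simp [hp]

theorem isOpen_compl_edges : IsOpen edgesᶜ := by
  convert isOpen_strip (α := 𝕀) univ (isOpen_Ioo (a := (0 : 𝕀)) (b := 1))
    (fun _ h => not_isMin_of_lt h.1) (fun _ h => not_isMax_of_lt h.2) using 1
  ext p
  exact notMem_edges_iff.trans (iff_of_eq (true_and _)).symm

theorem isOpen_setOf_notMem_and_snd_mem {U : Set 𝕀} (hU : IsOpen U) :
    IsOpen {p : 𝕆 | p ∉ edges ∪ sides ∧ (ofLex p).2 ∈ U} := by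
  convert isOpen_strip (α := 𝕀) (Ioo 0 1) (hU.inter (isOpen_Ioo (a := (0 : 𝕀)) (b := 1)))
    (fun _ h => not_isMin_of_lt h.2.1) (fun _ h => not_isMax_of_lt h.2.2) using 1
  ext p
  simp only [mem_union, not_or, notMem_edges_iff, notMem_sides_iff, mem_ofPred_eq, mem_inter_iff]
  tauto

theorem isOpen_setOf_lt_stratum {m i : ℕ} (hi : i < 4) : IsOpen {p | i < stratum m p} := by
  interval_cases i
  · simp only [stratum_pos_iff]
    exact (toFinite {_, _}).isClosed.isOpen_compl
  · simp only [one_lt_stratum_iff]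
    have finite_corners : (edges ∩ sides).Finite :=
      ((toFinite ({0, 1} ×ˢ {0, 1})).preimage ofLex.injective.injOn).subset
        fun p hp => ⟨hp.2, hp.1⟩
    exact finite_corners.isClosed.isOpen_compl
  · simp only [two_lt_stratum_iff]
    exact isOpen_compl_edges
  · simpa only [three_lt_stratum_iff, mem_univ, and_true] using
      isOpen_setOf_notMem_and_snd_mem isOpen_univ

theorem isOpen_setOf_lt_stratum_or_exists_isOpen (m i : ℕ) : IsOpen {p | i < stratum m p} ∨
    ∃ U, IsOpen U ∧ stratum m ⁻¹' {i} ⊆ U ∧ ∀ p ∈ U, stratum m p ≤ i := by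
  obtain hlt | ⟨j, rfl⟩ := i.lt_or_ge 4 |>.imp_right Nat.exists_eq_add_of_le
  · exact Or.inl (isOpen_setOf_lt_stratum hlt)
  refine (isOpen_setOf_lt_band_or_band_le m j).imp (fun h => ?_) fun h => ?_
  · simp only [four_add_lt_stratum_iff]
    exact isOpen_setOf_notMem_and_snd_mem h
  · refine ⟨_, isOpen_setOf_notMem_and_snd_mem h, fun p hp => ?_, fun p hp => ?_⟩
    · obtain ⟨hp, hband⟩ := stratum_eq_four_add_iff.1 hp
      exact ⟨hp, hband.le⟩
    · rw [stratum_of_notMem hp.1]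
      exact Nat.add_le_add_left hp.2 4

theorem reverseHomeo_mem_stratumStabilizer (m : ℕ) : reverseHomeo ∈ stratumStabilizer m :=
  mem_stratumStabilizer_iff.2 fun _ _ => band_symm m _

theorem lexFiberwiseIso_mem_stratumStabilizer {m : ℕ} {e : 𝕀 ≃o 𝕀} {k : 𝕀 → 𝕀 ≃o 𝕀}
    (hk : ∀ x ∈ Ioo 0 1, ∀ y, band m (k x y) = band m y) :
    (lexFiberwiseIso e k).toHomeomorph ∈ stratumStabilizer m :=
  mem_stratumStabilizer_iff.2 fun _ hp => hk _ (notMem_sides_iff.1 (not_or.1 hp).2) _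

theorem mem_orbit_stratumStabilizer_of_reverse {m : ℕ} {p q : 𝕆}
    (h : q ∈ MulAction.orbit (stratumStabilizer m) (reverse p)) :
    q ∈ MulAction.orbit (stratumStabilizer m) p := by
  have reverse_mem : reverse p ∈ MulAction.orbit (stratumStabilizer m) p :=
    ⟨⟨_, reverseHomeo_mem_stratumStabilizer m⟩, rfl⟩
  rwa [← MulAction.orbit_eq_iff.2 reverse_mem]

theorem mem_orbit_stratumStabilizer_of_orderIso {m : ℕ} {p q : 𝕆} (e k : 𝕀 ≃o 𝕀)
    (he : e (ofLex p).1 = (ofLex q).1) (hk : k (ofLex p).2 = (ofLex q).2)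
    (hband : p ∈ sides ∨ ∀ y, band m (k y) = band m y) :
    q ∈ MulAction.orbit (stratumStabilizer m) p := by
  classical
  let fiberMap (x : 𝕀) : 𝕀 ≃o 𝕀 := if x = (ofLex p).1 then k else OrderIso.refl 𝕀
  have band_fiberMap (x : 𝕀) (hx : x ∈ Ioo 0 1) (y : 𝕀) : band m (fiberMap x y) = band m y := by
    by_cases hxp : x = (ofLex p).1
    · have hp : p ∉ sides := notMem_sides_iff.2 (hxp ▸ hx)
      simpa only [fiberMap, if_pos hxp] using hband.resolve_left hp y
    · simp only [fiberMap, if_neg hxp, OrderIso.refl_apply]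
  refine ⟨⟨_, lexFiberwiseIso_mem_stratumStabilizer (e := e) band_fiberMap⟩, ?_⟩
  change toLex (e (ofLex p).1, fiberMap (ofLex p).1 (ofLex p).2) = q
  simp only [fiberMap, if_true, he, hk, Prod.mk.eta, toLex_ofLex]

theorem mem_orbit_stratumStabilizer_of_cell_eq {m : ℕ} {p q : 𝕆} (hp : p ∉ sides) (hq : q ∉ sides)
    (h : cell (((m + 1 : ℕ) : ℝ) * (ofLex p).2) = cell (((m + 1 : ℕ) : ℝ) * (ofLex q).2)) :
    q ∈ MulAction.orbit (stratumStabilizer m) p := by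
  obtain ⟨e, he, -⟩ :=
    exists_orderIso_apply_eq_of_mem_Ioo (notMem_sides_iff.1 hp) (notMem_sides_iff.1 hq)
  obtain ⟨k, hk, hcell⟩ := exists_orderIso_apply_eq_of_cell_eq m.succ_pos h
  exact mem_orbit_stratumStabilizer_of_orderIso e k he hk
    (Or.inr fun y => by rw [band, hcell, band])

theorem reverse_mem_sides_iff {p : 𝕆} : reverse p ∈ sides ↔ p ∈ sides :=
  smul_mem_sides_iff reverseHomeo

theorem reverse_mem_edges_iff {p : 𝕆} : reverse p ∈ edges ↔ p ∈ edges :=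
  smul_mem_edges_iff reverseHomeo

theorem mem_orbit_stratumStabilizer_of_notMem_sides {m : ℕ} {p q : 𝕆} (hp : p ∉ sides)
    (hq : q ∉ sides) (h : band m (ofLex p).2 = band m (ofLex q).2) :
    q ∈ MulAction.orbit (stratumStabilizer m) p := by
  rcases cell_eq_or_of_band_eq h with h | h
  · exact mem_orbit_stratumStabilizer_of_cell_eq hp hq h
  · exact mem_orbit_stratumStabilizer_of_reverse
      (mem_orbit_stratumStabilizer_of_cell_eq (reverse_mem_sides_iff.not.2 hp) hq h)

theorem mem_orbit_stratumStabilizer_of_mem_sides {m : ℕ} {p q : 𝕆} (hp : p ∈ sides)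
    (hpe : p ∉ edges) (hq : q ∈ sides) (hqe : q ∉ edges) :
    q ∈ MulAction.orbit (stratumStabilizer m) p := by
  wlog hpq : (ofLex p).1 = (ofLex q).1 generalizing p
  · refine mem_orbit_stratumStabilizer_of_reverse
      (this (reverse_mem_sides_iff.2 hp) (reverse_mem_edges_iff.not.2 hpe) ?_)
    exact unitInterval_symm_eq_of_ne hp hq hpq
  obtain ⟨k, hk, -⟩ :=
    exists_orderIso_apply_eq_of_mem_Ioo (notMem_edges_iff.1 hpe) (notMem_edges_iff.1 hqe)
  exact mem_orbit_stratumStabilizer_of_orderIso (OrderIso.refl 𝕀) k hpq hk (Or.inl hp)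

theorem eq_or_reverse_eq_of_mem_edges_inter_sides {p q : 𝕆} (hp : p ∈ edges ∩ sides)
    (hq : q ∈ edges ∩ sides) (h : p ∈ extremes ↔ q ∈ extremes) : p = q ∨ reverse p = q := by
  induction p with | _ p
  induction q with | _ q
  obtain ⟨x, y⟩ := p
  obtain ⟨s, t⟩ := q
  obtain ⟨rfl | rfl, rfl | rfl⟩ := hp <;> obtain ⟨rfl | rfl, rfl | rfl⟩ := hq <;>
    simp_all [extremes, reverse]

theorem band_eq_of_mem_edges {m : ℕ} {p q : 𝕆} (hp : p ∈ edges) (hq : q ∈ edges) :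
    band m (ofLex p).2 = band m (ofLex q).2 := by
  by_cases h : (ofLex p).2 = (ofLex q).2
  · rw [h]
  · rw [← unitInterval_symm_eq_of_ne hp hq h, band_symm]


theorem mem_orbit_stratumStabilizer_of_stratum_eq {m : ℕ} {p q : 𝕆}
    (h : stratum m p = stratum m q) : q ∈ MulAction.orbit (stratumStabilizer m) p := by
  have hextremes : p ∈ extremes ↔ q ∈ extremes := by
    rw [← not_iff_not, ← stratum_pos_iff, h, stratum_pos_iff]
  have hcorners : p ∈ edges ∩ sides ↔ q ∈ edges ∩ sides := by
    rw [← not_iff_not, ← one_lt_stratum_iff, h, one_lt_stratum_iff]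
  have hedges : p ∈ edges ↔ q ∈ edges := by
    rw [← not_iff_not, ← two_lt_stratum_iff, h, two_lt_stratum_iff]
  have hunion : p ∈ edges ∪ sides ↔ q ∈ edges ∪ sides := by
    rw [← not_iff_not, ← three_lt_stratum_iff, h, three_lt_stratum_iff]
  have hsides : p ∈ sides ↔ q ∈ sides := by
    rw [mem_inter_iff, mem_inter_iff] at hcorners
    rw [mem_union, mem_union] at hunion
    grind
  by_cases hpe : p ∈ edges <;> by_cases hps : p ∈ sides
  · rcases eq_or_reverse_eq_of_mem_edges_inter_sides ⟨hpe, hps⟩ (hcorners.1 ⟨hpe, hps⟩) hextremes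
      with rfl | rfl
    exacts [MulAction.mem_orbit_self p, mem_orbit_stratumStabilizer_of_reverse
      (MulAction.mem_orbit_self _)]
  · exact mem_orbit_stratumStabilizer_of_notMem_sides hps (hsides.not.1 hps)
      (band_eq_of_mem_edges hpe (hedges.1 hpe))
  · exact mem_orbit_stratumStabilizer_of_mem_sides hps hpe (hsides.1 hps) (hedges.not.1 hpe)
  · have hp := not_or.2 ⟨hpe, hps⟩
    rw [stratum_of_notMem hp, stratum_of_notMem (hunion.not.1 hp)] at h
    exact mem_orbit_stratumStabilizer_of_notMem_sides hps (hsides.not.1 hps) (Nat.add_left_cancel h)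

theorem encard_orbitClosures_stratumStabilizer (m : ℕ) :
    (orbitClosures (stratumStabilizer m)).encard = (m + 5 : ℕ) := by
  rw [encard_orbitClosures, encard_orbitClosureFamily_colorStabilizer
    (fun _ _ => mem_orbit_stratumStabilizer_of_stratum_eq)
    (isOpen_setOf_lt_stratum_or_exists_isOpen m), range_stratum, encard_eq_coe_toFinset_card]
  simp

theorem stratumStabilizer_zero : stratumStabilizer 0 = ⊤ := by
  refine eq_top_iff.2 fun g _ => mem_stratumStabilizer_iff.2 fun p hp => ?_
  have hpe := (not_or.1 hp).1
  have hgpe := (smul_mem_edges_iff g).not.2 hpe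
  rw [Nat.le_zero.1 (band_le (notMem_edges_iff.1 hpe)),
    Nat.le_zero.1 (band_le (notMem_edges_iff.1 hgpe))]

theorem encard_orbitClosures_top :
    (orbitClosures (⊤ : Subgroup (𝕆 ≃ₜ 𝕆))).encard = (5 : ℕ) :=
  stratumStabilizer_zero ▸ encard_orbitClosures_stratumStabilizer 0

theorem five_le_encard_orbitClosures (G : Subgroup (𝕆 ≃ₜ 𝕆)) :
    (5 : ℕ) ≤ (orbitClosures G).encard := by
  rw [← encard_orbitClosures_top, encard_orbitClosures, encard_orbitClosures]
  exact encard_orbitClosureFamily_anti le_top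

theorem infinite_orbitClosures_bot : (orbitClosures (⊥ : Subgroup (𝕆 ≃ₜ 𝕆))).Infinite := by
  have : Infinite 𝕀 := (Icc_infinite zero_lt_one).to_subtype
  have : Infinite 𝕆 := .of_injective _ (strictMono_toLex_mk (0 : 𝕀)).injective
  rw [← encard_eq_top_iff, encard_orbitClosures]
  exact infinite_orbitClosureFamily_bot.encard_eq

end LexSquare

/-- `P_h(𝕆) = {n : n ≥ 4} ∪ {+∞}`: (i) the full homeomorphism group of the
lexicographically ordered square has exactly 5 closures of orbits, i.e. height 4;
(ii) every subgroup has infinitely many, or at least 5, closures of orbits; (iii) for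
every `n ≥ 4` some subgroup has exactly `n + 1` closures of orbits (height `n`);
and (iv) some subgroup has infinitely many closures of orbits (height `+∞`). -/
theorem lex_square_heights :
    ((orbitClosures ⊤).Finite ∧ (orbitClosures ⊤).ncard = 5) ∧
    (∀ G, (orbitClosures G).Finite → 5 ≤ (orbitClosures G).ncard) ∧
    (∀ n : ℕ, 4 ≤ n → ∃ G, (orbitClosures G).Finite ∧ (orbitClosures G).ncard = n + 1) ∧
    (∃ G, (orbitClosures G).Infinite) := by
  have finite_and_ncard_eq {S : Set (Set (𝕀 × 𝕀))} {k : ℕ} (hS : S.encard = k) :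
      S.Finite ∧ S.ncard = k :=
    ⟨finite_of_encard_eq_coe hS, by rw [ncard, hS, ENat.toNat_natCast]⟩
  refine ⟨finite_and_ncard_eq LexSquare.encard_orbitClosures_top, fun G hG => ?_, fun n hn => ?_,
    ⊥, LexSquare.infinite_orbitClosures_bot⟩
  · exact ENat.natCast_le_natCast.1 (hG.cast_ncard_eq ▸ LexSquare.five_le_encard_orbitClosures G)
  · obtain ⟨m, rfl⟩ := Nat.exists_eq_add_of_le' hn
    exact ⟨LexSquare.stratumStabilizer m,
      finite_and_ncard_eq (LexSquare.encard_orbitClosures_stratumStabilizer m)⟩
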